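/- For all real x, y with |x| + |y| < 1 and x + y ≠ 0, the double series Q(x,y) := Σ_{n≥0} Σ_{k≥0} q_{n,k}·x^n·y^k converges absolutely and Q(x,y) = Σ_{ℓ≥0} (x+y)^ℓ·E[(x/(x+y))^{N_ℓ}]. -/

import Mathlib

open MeasureTheory

noncomputable section

/-- The triangle with vertices (0,0), (1,0), (0,1). -/
def T : Set (ℝ × ℝ) := convexHull ℝ {(0, 0), (1, 0), (0, 1)}

/-- The uniform distribution on `T`: twice Lebesgue measure restricted to `T`. -/
def μT : Measure (ℝ × ℝ) := (2 : ENNReal) • (volume.restrict T)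

/-- Joint law of `n` independent uniform points in `T`. -/
def P (n : ℕ) : Measure (Fin n → ℝ × ℝ) := Measure.pi fun _ => μT

/-- The random convex chain: convex hull of the points together with `(1,0)` and `(0,1)`. -/
def Tchain (n : ℕ) (ω : Fin n → ℝ × ℝ) : Set (ℝ × ℝ) :=
  convexHull ℝ (Set.range ω ∪ {(1, 0), (0, 1)})

/-- Normalized area `V_n = 2 vol(T_n)`. -/
def V (n : ℕ) (ω : Fin n → ℝ × ℝ) : ℝ := 2 * (volume (Tchain n ω)).toReal

/-- Number of vertices of `T_n` other than the two corners. -/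
def N (n : ℕ) (ω : Fin n → ℝ × ℝ) : ℕ :=
  (Set.extremePoints ℝ (Tchain n ω)).ncard - 2

/-- Normalized moments `q_{n,k} = C(n+k,k) E[V_n^k]`. -/
def q (n k : ℕ) : ℝ := ((n + k).choose k : ℝ) * ∫ ω, (V n ω) ^ k ∂ P n

/-- Probability generating function of `N_n`. -/
def G (n : ℕ) (t : ℝ) : ℝ := ∫ ω, t ^ (N n ω) ∂ P n

/-- Harmonic number. -/
def H (j : ℕ) : ℝ := ∑ i ∈ Finset.range j, 1 / ((i : ℝ) + 1)

/-- Generalized harmonic number of order 2. -/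
def H2 (j : ℕ) : ℝ := ∑ i ∈ Finset.range j, 1 / ((i : ℝ) + 1) ^ 2

/-- `c(k,ℓ)`: elementary symmetric polynomial `e_k` of `2/(j(j+1))`, `j = 1,…,ℓ`. -/
def c (k l : ℕ) : ℝ :=
  ∑ S ∈ (Finset.Icc 1 l).powersetCard k, ∏ j ∈ S, 2 / ((j : ℝ) * ((j : ℝ) + 1))

/-!
Fix `ℓ = n + k`. The binomial coefficient in `q_{n,k}` counts the `n`-element sets `S` of indices
among `ℓ` independent points, and by Fubini `E[V_n^k]` is the probability that the points outside
`S` all fall into the hull of the corners and the points indexed by `S`. By the Krein–Milman theorem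
this happens exactly when `S` contains the set `W` of the indices of the vertices, and
`Σ_{S ⊇ W} x^|S| y^(ℓ-|S|) = x^|W| (x+y)^(ℓ-|W|)`. Taking expectations, the terms of `Q` of total
degree `ℓ` add up to `(x+y)^ℓ E[(x/(x+y))^{N_ℓ}]`. As moments are at most `1`, the double series is
dominated by `Σ_ℓ (|x|+|y|)^ℓ`.
-/

section Convexity

lemma convexHull_range_eq_image_stdSimplex {R E ι : Type*} [Field R] [LinearOrder R]
    [IsStrictOrderedRing R] [AddCommGroup E] [Module R E] [Fintype ι] (v : ι → E) :
    convexHull R (Set.range v) = Fintype.linearCombination R v '' stdSimplex R ι := by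
  classical
  rw [← convexHull_rangle_single_eq_stdSimplex, LinearMap.image_convexHull, ← Set.range_comp]
  simp only [Function.comp_def, Fintype.linearCombination_apply_single, one_smul]

variable {E ι : Type*} [AddCommGroup E] [Module ℝ E] [TopologicalSpace E] [T2Space E]
  [IsTopologicalAddGroup E] [ContinuousSMul ℝ E]

lemma isClosed_setOf_mem_convexHull_range [Finite ι] :
    IsClosed {z : (ι → E) × E | z.2 ∈ convexHull ℝ (Set.range z.1)} := by
  have := Fintype.ofFinite ι
  have : CompactSpace (stdSimplex ℝ ι) := isCompact_iff_compactSpace.mp (isCompact_stdSimplex ℝ ι)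
  have hweight (i : ι) : Continuous fun u : stdSimplex ℝ ι × ((ι → E) × E) => u.1.1 i :=
    (continuous_apply i).comp (continuous_subtype_val.comp continuous_fst)
  have hclosed : IsClosed {u : stdSimplex ℝ ι × ((ι → E) × E) |
      ∑ i, u.1.1 i • u.2.1 i = u.2.2} := isClosed_eq
      (continuous_finsetSum _ fun i _ => (hweight i).smul (by fun_prop)) (by fun_prop)
  convert isClosedMap_snd_of_compactSpace _ hclosed using 1
  ext ⟨v, p⟩
  simp [convexHull_range_eq_image_stdSimplex, Fintype.linearCombination_apply]

lemma convexHull_extremePoints_convexHull [LocallyConvexSpace ℝ E] {s : Set E} (hs : s.Finite) :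
    convexHull ℝ ((convexHull ℝ s).extremePoints ℝ) = convexHull ℝ s := by
  have hfin := hs.subset (extremePoints_convexHull_subset (𝕜 := ℝ))
  rw [← (hfin.isClosed_convexHull ℝ).closure_eq]
  exact closure_convexHull_extremePoints (hs.isCompact_convexHull ℝ) (convex_convexHull ℝ s)

end Convexity

lemma sum_superset_pow_mul_pow {R ι : Type*} [CommSemiring R] [Fintype ι] [DecidableEq ι]
    (W : Finset ι) (x y : R) :
    ∑ S with W ⊆ S, x ^ S.card * y ^ (Fintype.card ι - S.card)
      = x ^ W.card * (x + y) ^ (Fintype.card ι - W.card) := by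
  rw [← Finset.card_compl W, ← Finset.sum_pow_mul_eq_add_pow, Finset.mul_sum]
  refine Finset.sum_nbij' (· \ W) (W ∪ ·) ?_ ?_ ?_ ?_ ?_
  · intro S _
    simpa [Finset.subset_compl_iff_disjoint_right] using Finset.sdiff_disjoint
  · intro U _
    simp
  · intro S hS
    exact Finset.union_sdiff_of_subset (Finset.mem_filter.mp hS).2
  · intro U hU
    have : Disjoint U W := Finset.subset_compl_iff_disjoint_right.mp (Finset.mem_powerset.mp hU)
    rw [Finset.union_sdiff_cancel_left this.symm]
  · intro S hS
    have hWS := (Finset.mem_filter.mp hS).2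
    have hcard := Finset.card_sdiff_add_card_eq_card hWS
    rw [Finset.card_compl, ← mul_assoc, ← pow_add, ← hcard]
    congr 2 <;> omega

section Measure

variable {α β ι : Type*} [MeasurableSpace α] [MeasurableSpace β]

lemma measureReal_prod_eq_integral (μ : Measure α) (ν : Measure β) [IsFiniteMeasure ν]
    {s : Set (α × β)} (hs : MeasurableSet s) :
    (μ.prod ν).real s = ∫ a, ν.real (Prod.mk a ⁻¹' s) ∂μ := by
  simp only [measureReal_def]
  rw [Measure.prod_apply hs, integral_toReal (measurable_measure_prodMk_left hs).aemeasurable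
    (Filter.Eventually.of_forall fun _ => measure_lt_top _ _)]

lemma prod_diagonal [MeasurableEq α] (μ ν : Measure α) [SFinite ν] [NullSingletonClass ν] :
    (μ.prod ν) (Set.diagonal α) = 0 := by
  rw [Measure.measure_prod_null measurableSet_diagonal]
  refine Filter.Eventually.of_forall fun a => ?_
  have : Prod.mk a ⁻¹' Set.diagonal α = {a} := by ext; simp [eq_comm]
  simp [this]

lemma ae_ne_of_indepFun [MeasurableEq α] {Ω : Type*} [MeasurableSpace Ω] {μ : Measure Ω}
    [IsFiniteMeasure μ] {X Y : Ω → α} (hX : AEMeasurable X μ) (hY : AEMeasurable Y μ)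
    (hXY : ProbabilityTheory.IndepFun X Y μ) [NullSingletonClass (μ.map Y)] :
    ∀ᵐ ω ∂μ, X ω ≠ Y ω := by
  refine ae_of_ae_map (hX.prodMk hY) (p := fun z : α × α => z.1 ≠ z.2) ?_
  rw [(ProbabilityTheory.indepFun_iff_map_prod_eq_prod_map_map hX hY).mp hXY, ae_iff]
  simpa only [not_not] using! prod_diagonal (μ.map X) (μ.map Y)

variable [Fintype ι] (μ : Measure α) [IsProbabilityMeasure μ]

lemma ae_pi_forall_of_ae {p : α → Prop} (hp : ∀ᵐ a ∂μ, p a) :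
    ∀ᵐ ω ∂Measure.pi fun _ : ι => μ, ∀ i, p (ω i) :=
  ae_all_iff.mpr fun i =>
    (measurePreserving_eval (fun _ : ι => μ) i).quasiMeasurePreserving.ae hp

lemma ae_pi_injective [MeasurableEq α] [NullSingletonClass μ] :
    ∀ᵐ ω ∂Measure.pi fun _ : ι => μ, Function.Injective ω := by
  have hne : ∀ᵐ ω ∂Measure.pi fun _ : ι => μ, ∀ i j, i ≠ j → ω i ≠ ω j := by
    simp_rw [ae_all_iff]
    intro i j hij
    have hmap := (measurePreserving_eval (fun _ : ι => μ) j).map_eq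
    have : NullSingletonClass ((Measure.pi fun _ : ι => μ).map (Function.eval j)) := by
      rwa [hmap]
    exact ae_ne_of_indepFun (measurable_pi_apply i).aemeasurable
      (measurable_pi_apply j).aemeasurable
      ((ProbabilityTheory.iIndepFun_pi (X := fun _ => id) fun _ => aemeasurable_id).indepFun hij)
  filter_upwards [hne] with ω hω i j
  exact not_imp_not.mp (hω i j)

end Measure

section AnchoredHull

variable {E ι κ : Type*} [AddCommGroup E] [Module ℝ E]

/-- The convex hull of a family of points together with a fixed set `C` of anchors. For the anchors
`(1,0)`, `(0,1)` and a family of `n` points this is the convex chain `T_n`. -/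
def anchoredHull (C : Set E) (ω : ι → E) : Set E := convexHull ℝ (Set.range ω ∪ C)

lemma anchoredHull_comp_equiv (C : Set E) (ω : ι → E) (e : κ ≃ ι) :
    anchoredHull C (ω ∘ e) = anchoredHull C ω := by
  rw [anchoredHull, EquivLike.range_comp, anchoredHull]

lemma mem_anchoredHull (C : Set E) (ω : ι → E) (i : ι) : ω i ∈ anchoredHull C ω :=
  subset_convexHull ℝ _ (Or.inl ⟨i, rfl⟩)

lemma anchor_subset_anchoredHull (C : Set E) (ω : ι → E) : C ⊆ anchoredHull C ω :=
  Set.subset_union_right.trans (subset_convexHull ℝ _)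

lemma anchoredHull_subset {C K : Set E} {ω : ι → E} (hK : Convex ℝ K) (hω : ∀ i, ω i ∈ K)
    (hC : C ⊆ K) : anchoredHull C ω ⊆ K :=
  convexHull_min (Set.union_subset (Set.range_subset_iff.mpr hω) hC) hK

open Classical in
/-- The indices of those points of the family `ω` that are vertices of `anchoredHull C ω`. -/
def vertexIndices [Fintype ι] (C : Set E) (ω : ι → E) : Finset ι :=
  {i | ω i ∈ (anchoredHull C ω).extremePoints ℝ}

lemma mem_vertexIndices [Fintype ι] {C : Set E} {ω : ι → E} {i : ι} :
    i ∈ vertexIndices C ω ↔ ω i ∈ (anchoredHull C ω).extremePoints ℝ := by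
  simp [vertexIndices]

lemma extremePoints_anchoredHull_subset [Fintype ι] (C : Set E) (ω : ι → E) :
    (anchoredHull C ω).extremePoints ℝ ⊆ ω '' vertexIndices C ω ∪ C := by
  intro p hp
  rcases extremePoints_convexHull_subset hp with ⟨i, rfl⟩ | hC
  · exact Or.inl ⟨i, mem_vertexIndices.mpr hp, rfl⟩
  · exact Or.inr hC

lemma ncard_extremePoints_anchoredHull [Fintype ι] {C : Set E} (hC : C.Finite) {ω : ι → E}
    (hext : C ⊆ (anchoredHull C ω).extremePoints ℝ) (hω : Function.Injective ω)
    (hωC : ∀ i, ω i ∉ C) :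
    ((anchoredHull C ω).extremePoints ℝ).ncard = (vertexIndices C ω).card + C.ncard := by
  have heq : (anchoredHull C ω).extremePoints ℝ = ω '' vertexIndices C ω ∪ C := by
    refine (extremePoints_anchoredHull_subset C ω).antisymm (Set.union_subset ?_ hext)
    rintro _ ⟨i, hi, rfl⟩
    exact mem_vertexIndices.mp hi
  have hdisj : Disjoint (ω '' vertexIndices C ω) C := by
    rw [Set.disjoint_left]
    rintro _ ⟨i, _, rfl⟩
    exact hωC i
  rw [heq, Set.ncard_union_eq hdisj (Set.toFinite _) hC, Set.ncard_image_of_injective _ hω,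
    Set.ncard_coe_finset]

/-- The event that the points indexed by `S` already span the hull: all the others lie in the hull
of `C` and the points indexed by `S`. -/
def spanningEvent (C : Set E) (S : Finset ι) : Set (ι → E) :=
  {ω | ∀ j ∉ S, ω j ∈ anchoredHull C (S.restrict ω)}

lemma anchoredHull_restrict_of_mem_spanningEvent {C : Set E} {S : Finset ι} {ω : ι → E}
    (h : ω ∈ spanningEvent C S) : anchoredHull C (S.restrict ω) = anchoredHull C ω := by
  apply Set.Subset.antisymm
  · exact anchoredHull_subset (convex_convexHull ℝ _) (fun i => mem_anchoredHull C ω i)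
      (anchor_subset_anchoredHull C ω)
  · refine anchoredHull_subset (convex_convexHull ℝ _) (fun i => ?_)
      (anchor_subset_anchoredHull C _)
    by_cases hi : i ∈ S
    · exact mem_anchoredHull C (S.restrict ω) ⟨i, hi⟩
    · exact h i hi

variable [TopologicalSpace E] [T2Space E] [IsTopologicalAddGroup E] [ContinuousSMul ℝ E]

lemma anchoredHull_subset_of_vertexIndices_subset [LocallyConvexSpace ℝ E] [Fintype ι] {C : Set E}
    (hC : C.Finite) {S : Finset ι} {ω : ι → E} (hS : vertexIndices C ω ⊆ S) :
    anchoredHull C ω ⊆ anchoredHull C (S.restrict ω) := by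
  rw [anchoredHull, ← convexHull_extremePoints_convexHull ((Set.finite_range ω).union hC)]
  refine convexHull_mono ((extremePoints_anchoredHull_subset C ω).trans ?_)
  refine Set.union_subset_union_left C ?_
  rintro _ ⟨i, hi, rfl⟩
  exact ⟨⟨i, hS hi⟩, rfl⟩

lemma mem_spanningEvent_iff [LocallyConvexSpace ℝ E] [Fintype ι] {C : Set E} (hC : C.Finite)
    {S : Finset ι} {ω : ι → E} (hω : Function.Injective ω) (hωC : ∀ i, ω i ∉ C) :
    ω ∈ spanningEvent C S ↔ vertexIndices C ω ⊆ S := by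
  constructor
  · intro h i hi
    rw [mem_vertexIndices, ← anchoredHull_restrict_of_mem_spanningEvent h] at hi
    rcases extremePoints_convexHull_subset hi with ⟨j, hj⟩ | hiC
    · exact hω hj ▸ j.2
    · exact absurd hiC (hωC i)
  · intro h j _
    exact anchoredHull_subset_of_vertexIndices_subset hC h (mem_anchoredHull C ω j)

lemma isClosed_setOf_mem_anchoredHull [Finite ι] {C : Set E} (hC : C.Finite) :
    IsClosed {z : (ι → E) × E | z.2 ∈ anchoredHull C z.1} := by
  have := hC.to_subtype
  have hcont : Continuous fun z : (ι → E) × E => (Sum.elim z.1 ((↑) : C → E), z.2) := by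
    refine Continuous.prodMk (continuous_pi ?_) continuous_snd
    rintro (i | c)
    · exact (continuous_apply i).comp continuous_fst
    · exact continuous_const
  convert isClosed_setOf_mem_convexHull_range.preimage hcont using 1
  ext z
  simp [anchoredHull]

end AnchoredHull

section RandomHull

open Finset.HasAntidiagonal (antidiagonal)

variable {E ι κ : Type*} [AddCommGroup E] [Module ℝ E] [MeasurableSpace E]

/-- The `k`-th moment `E[μ(K)^k]`, where `K` is the hull of `n` independent points of law `μ` and
the anchors `C`. -/
def hullMoment (μ : Measure E) (C : Set E) (n k : ℕ) : ℝ :=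
  ∫ ω, μ.real (anchoredHull C ω) ^ k ∂Measure.pi fun _ : Fin n => μ

lemma integral_anchoredHull_congr [Fintype ι] [Fintype κ] (μ : Measure E) [SigmaFinite μ]
    (C : Set E) (e : ι ≃ κ) (f : Set E → ℝ) :
    ∫ ω, f (anchoredHull C ω) ∂(Measure.pi fun _ : ι => μ)
      = ∫ ω, f (anchoredHull C ω) ∂(Measure.pi fun _ : κ => μ) := by
  rw [← (measurePreserving_arrowCongr' (fun _ => μ) (fun _ => μ) e (.refl E)
    fun _ => .id μ).integral_comp']
  refine integral_congr_ae (Filter.Eventually.of_forall fun ω => ?_)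
  exact congrArg f (anchoredHull_comp_equiv C ω e.symm).symm

lemma hullMoment_nonneg (μ : Measure E) (C : Set E) (n k : ℕ) : 0 ≤ hullMoment μ C n k :=
  integral_nonneg fun _ => pow_nonneg measureReal_nonneg k

lemma spanningEvent_eq_preimage [DecidableEq ι] (C : Set E) (S : Finset ι) :
    spanningEvent C S = MeasurableEquiv.piEquivPiSubtypeProd (fun _ : ι => E) (· ∈ S) ⁻¹'
      {z | ∀ j, z.2 j ∈ anchoredHull C z.1} := by
  ext ω
  exact (Subtype.forall (p := (· ∉ S)) (q := fun j => ω j ∈ anchoredHull C (S.restrict ω))).symm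

variable (μ : Measure E) [IsProbabilityMeasure μ] (C : Set E)

lemma hullMoment_le_one (n k : ℕ) : hullMoment μ C n k ≤ 1 := by
  have h : ∀ ω : Fin n → E, μ.real (anchoredHull C ω) ^ k ≤ 1 :=
    fun _ => pow_le_one₀ measureReal_nonneg measureReal_le_one
  simpa [hullMoment] using integral_mono_of_nonneg (μ := Measure.pi fun _ : Fin n => μ)
    (.of_forall fun _ => pow_nonneg measureReal_nonneg k) (integrable_const 1) (.of_forall h)

variable [TopologicalSpace E] [T2Space E] [IsTopologicalAddGroup E] [ContinuousSMul ℝ E]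
  [SecondCountableTopology E] [BorelSpace E] {C}

lemma measurableSet_setOf_forall_mem_anchoredHull [Finite ι] [Countable κ] (hC : C.Finite) :
    MeasurableSet {z : (ι → E) × (κ → E) | ∀ j, z.2 j ∈ anchoredHull C z.1} := by
  rw [Set.ofPred_forall]
  refine (isClosed_iInter fun j => ?_).measurableSet
  exact (isClosed_setOf_mem_anchoredHull hC).preimage
    (f := fun z : (ι → E) × (κ → E) => (z.1, z.2 j)) (by fun_prop)

lemma measurableSet_spanningEvent [Finite ι] (hC : C.Finite) (S : Finset ι) :
    MeasurableSet (spanningEvent C S) := by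
  classical
  rw [spanningEvent_eq_preimage]
  exact MeasurableEquiv.measurable _ (measurableSet_setOf_forall_mem_anchoredHull hC)

variable [Fintype ι]

lemma measureReal_spanningEvent (hC : C.Finite) (S : Finset ι) :
    (Measure.pi fun _ : ι => μ).real (spanningEvent C S)
      = hullMoment μ C S.card (Fintype.card ι - S.card) := by
  classical
  have hmeas := measurableSet_setOf_forall_mem_anchoredHull (ι := {i // i ∈ S})
    (κ := {i // i ∉ S}) hC
  have hcard : Fintype.card {i // i ∉ S} = Fintype.card ι - S.card := by
    rw [Fintype.card_subtype_compl, Fintype.card_coe]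
  have hfiber (a : {i // i ∈ S} → E) : (Measure.pi fun _ : {i // i ∉ S} => μ).real
      (Prod.mk a ⁻¹' {z | ∀ j, z.2 j ∈ anchoredHull C z.1})
        = μ.real (anchoredHull C a) ^ (Fintype.card ι - S.card) := by
    have : Prod.mk a ⁻¹' {z : _ × ({i // i ∉ S} → E) | ∀ j, z.2 j ∈ anchoredHull C z.1}
        = Set.univ.pi fun _ => anchoredHull C a := by ext; simp
    rw [this, measureReal_def, Measure.pi_pi, Finset.prod_const, Finset.card_univ, hcard,
      ENNReal.toReal_pow, measureReal_def]
  rw [spanningEvent_eq_preimage, measureReal_def,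
    (measurePreserving_piEquivPiSubtypeProd (fun _ => μ) _).measure_preimage
      hmeas.nullMeasurableSet, ← measureReal_def, measureReal_prod_eq_integral _ _ hmeas]
  simp_rw [hfiber, hullMoment]
  convert integral_anchoredHull_congr μ C S.equivFin fun K => μ.real K ^ (Fintype.card ι - S.card)

variable [LocallyConvexSpace ℝ E] [NullSingletonClass μ]

lemma ae_sum_indicator_spanningEvent (hC : C.Finite) (x y : ℝ) :
    ∀ᵐ ω ∂Measure.pi fun _ : ι => μ,
      ∑ S, (spanningEvent C S).indicator
          (fun _ => x ^ S.card * y ^ (Fintype.card ι - S.card)) ω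
        = x ^ (vertexIndices C ω).card * (x + y) ^ (Fintype.card ι - (vertexIndices C ω).card) := by
  classical
  filter_upwards [ae_pi_injective μ, ae_pi_forall_of_ae μ (hC.countable.ae_notMem μ)]
    with ω hω hωC
  simp only [Set.indicator_apply, mem_spanningEvent_iff hC hω hωC]
  rw [← Finset.sum_filter, sum_superset_pow_mul_pow]

theorem sum_choose_mul_hullMoment (hC : C.Finite) (l : ℕ) (x y : ℝ) :
    ∑ p ∈ antidiagonal l, l.choose p.1 * hullMoment μ C p.1 p.2 * (x ^ p.1 * y ^ p.2)
      = ∫ ω, x ^ (vertexIndices C ω).card * (x + y) ^ (l - (vertexIndices C ω).card)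
          ∂Measure.pi fun _ : Fin l => μ := by
  have hae := ae_sum_indicator_spanningEvent (ι := Fin l) μ hC x y
  simp only [Fintype.card_fin] at hae
  symm
  calc
    _ = ∑ S : Finset (Fin l), (Measure.pi fun _ : Fin l => μ).real (spanningEvent C S) *
          (x ^ S.card * y ^ (l - S.card)) := by
      rw [← integral_congr_ae hae, integral_finsetSum _ fun S _ =>
        (integrable_const _).indicator (measurableSet_spanningEvent hC S)]
      simp_rw [integral_indicator_const _ (measurableSet_spanningEvent hC _), smul_eq_mul]
    _ = ∑ n ∈ Finset.range (l + 1), l.choose n • (hullMoment μ C n (l - n) *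
          (x ^ n * y ^ (l - n))) := by
      simp_rw [measureReal_spanningEvent μ hC, Fintype.card_fin, ← Finset.powerset_univ]
      rw [Finset.sum_powerset_apply_card
        fun n => hullMoment μ C n (l - n) * (x ^ n * y ^ (l - n)), Finset.card_fin]
    _ = _ := by
      rw [Finset.Nat.sum_antidiagonal_eq_sum_range_succ
        fun n k => l.choose n * hullMoment μ C n k * (x ^ n * y ^ k)]
      simp only [nsmul_eq_mul, mul_assoc]

end RandomHull

section Triangle

open Finset.HasAntidiagonal (antidiagonal mem_antidiagonal)

/-- The endpoints `(1,0)` and `(0,1)` of the convex chain. -/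
def corners : Set (ℝ × ℝ) := {(1, 0), (0, 1)}

lemma finite_corners : corners.Finite := Set.toFinite {((1 : ℝ), (0 : ℝ)), (0, 1)}

lemma ncard_corners : corners.ncard = 2 := Set.ncard_pair (by simp)

lemma mem_T_iff {p : ℝ × ℝ} : p ∈ T ↔ 0 ≤ p.1 ∧ 0 ≤ p.2 ∧ p.1 + p.2 ≤ 1 := by
  let v : Fin 3 → ℝ × ℝ := ![(0, 0), (1, 0), (0, 1)]
  have hT : T = convexHull ℝ (Set.range v) := by
    simp only [T, v, Matrix.range_cons, Matrix.range_empty, Set.union_empty, Set.singleton_union]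
  have hv (w : Fin 3 → ℝ) : Fintype.linearCombination ℝ v w = (w 1, w 2) := by
    simp [v, Fintype.linearCombination_apply, Fin.sum_univ_three]
  rw [hT, convexHull_range_eq_image_stdSimplex]
  constructor
  · rintro ⟨w, ⟨hw, hsum⟩, rfl⟩
    rw [Fin.sum_univ_three] at hsum
    rw [hv]
    exact ⟨hw 1, hw 2, by linarith [hw 0]⟩
  · rintro ⟨h₁, h₂, h₁₂⟩
    refine ⟨![1 - (p.1 + p.2), p.1, p.2], ⟨?_, ?_⟩, hv _⟩
    · simp [Fin.forall_fin_succ, h₁, h₂, h₁₂]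
    · simp [Fin.sum_univ_three, add_assoc]

lemma isClosed_T : IsClosed T := (Set.toFinite _).isClosed_convexHull ℝ

lemma volume_preimage_T (u : ℝ) :
    volume (Prod.mk u ⁻¹' T)
      = (Set.Icc (0 : ℝ) 1).indicator (fun u => ENNReal.ofReal (1 - u)) u := by
  by_cases hu : u ∈ Set.Icc (0 : ℝ) 1
  · have : Prod.mk u ⁻¹' T = Set.Icc 0 (1 - u) := by
      ext v
      simp [mem_T_iff, hu.1, le_sub_iff_add_le']
    rw [this, Set.indicator_of_mem hu, Real.volume_Icc, sub_zero]
  · have : Prod.mk u ⁻¹' T = ∅ := by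
      refine Set.eq_empty_of_forall_notMem fun v hv => hu ?_
      obtain ⟨hu₀, hv₀, huv⟩ := mem_T_iff.mp hv
      exact ⟨hu₀, (le_add_of_nonneg_right hv₀).trans huv⟩
    rw [this, Set.indicator_of_notMem hu, measure_empty]

lemma volume_T : volume T = 2⁻¹ := by
  have hint : ∫ u in (0 : ℝ)..1, (1 - u) = 2⁻¹ := by
    rw [intervalIntegral.integral_sub (by simp) (by simp)]
    norm_num [integral_id]
  rw [Measure.volume_eq_prod, Measure.prod_apply isClosed_T.measurableSet]
  simp_rw [volume_preimage_T]
  rw [lintegral_indicator measurableSet_Icc, ← ofReal_integral_eq_lintegral_ofReal,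
    integral_Icc_eq_integral_Ioc, ← intervalIntegral.integral_of_le zero_le_one, hint,
    ENNReal.ofReal_inv_of_pos two_pos, ENNReal.ofReal_ofNat]
  · exact (by fun_prop : Continuous fun u : ℝ => 1 - u).continuousOn.integrableOn_Icc
  · filter_upwards [ae_restrict_mem measurableSet_Icc] with u hu
    exact sub_nonneg.mpr hu.2

instance : IsProbabilityMeasure μT where
  measure_univ := by
    simpa [μT, volume_T] using ENNReal.mul_inv_cancel two_ne_zero ENNReal.ofNat_ne_top

instance : NullSingletonClass μT := ⟨fun p => by simp [μT]⟩

lemma ae_mem_T : ∀ᵐ p ∂μT, p ∈ T :=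
  Measure.ae_smul_measure (ae_restrict_mem isClosed_T.measurableSet) _

lemma corners_subset_T : corners ⊆ T := (Set.subset_insert _ _).trans (subset_convexHull ℝ _)

lemma corners_subset_extremePoints_T : corners ⊆ T.extremePoints ℝ := by
  refine Set.Subset.trans ?_ exposedPoints_subset_extremePoints
  rintro p (rfl | rfl)
  · refine ⟨corners_subset_T (Or.inl rfl), ContinuousLinearMap.fst ℝ ℝ ℝ, fun p hp => ?_⟩
    obtain ⟨_, h₂, h₁₂⟩ := mem_T_iff.mp hp
    simp only [ContinuousLinearMap.coe_fst', Prod.ext_iff]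
    refine ⟨?_, fun h => ⟨?_, ?_⟩⟩ <;> linarith
  · refine ⟨corners_subset_T (Or.inr rfl), ContinuousLinearMap.snd ℝ ℝ ℝ, fun p hp => ?_⟩
    obtain ⟨h₁, _, h₁₂⟩ := mem_T_iff.mp hp
    simp only [ContinuousLinearMap.coe_snd', Prod.ext_iff]
    refine ⟨?_, fun h => ⟨?_, ?_⟩⟩ <;> linarith

variable {n : ℕ} {ω : Fin n → ℝ × ℝ}

lemma Tchain_eq_anchoredHull : Tchain n ω = anchoredHull corners ω := rfl

lemma Tchain_subset_T (hω : ∀ i, ω i ∈ T) : Tchain n ω ⊆ T :=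
  anchoredHull_subset (convex_convexHull ℝ _) hω corners_subset_T

lemma V_eq_measureReal (hω : ∀ i, ω i ∈ T) : V n ω = μT.real (anchoredHull corners ω) := by
  have hclosed : IsClosed (Tchain n ω) :=
    ((Set.finite_range ω).union finite_corners).isClosed_convexHull ℝ
  rw [← Tchain_eq_anchoredHull, measureReal_def, μT, Measure.smul_apply,
    Measure.restrict_apply hclosed.measurableSet, Set.inter_eq_left.mpr (Tchain_subset_T hω), V]
  simp

lemma N_eq_card_vertexIndices (hT : ∀ i, ω i ∈ T) (hω : Function.Injective ω)
    (hωC : ∀ i, ω i ∉ corners) : N n ω = (vertexIndices corners ω).card := by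
  have hext : corners ⊆ (anchoredHull corners ω).extremePoints ℝ := fun p hp =>
    inter_extremePoints_subset_extremePoints_of_subset (Tchain_subset_T hT)
      ⟨anchor_subset_anchoredHull corners ω hp, corners_subset_extremePoints_T hp⟩
  rw [N, Tchain_eq_anchoredHull, ncard_extremePoints_anchoredHull finite_corners hext hω hωC,
    ncard_corners, Nat.add_sub_cancel]

lemma q_eq_choose_mul_hullMoment (n k : ℕ) :
    q n k = (n + k).choose k * hullMoment μT corners n k := by
  rw [q, hullMoment, P]
  congr 1
  refine integral_congr_ae ?_
  filter_upwards [ae_pi_forall_of_ae μT ae_mem_T] with ω hω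
  rw [V_eq_measureReal hω]

lemma pow_mul_G_div (l : ℕ) {x s : ℝ} (hs : s ≠ 0) :
    s ^ l * G l (x / s) = ∫ ω, x ^ (vertexIndices corners ω).card *
      s ^ (l - (vertexIndices corners ω).card) ∂P l := by
  rw [G, ← integral_const_mul]
  refine integral_congr_ae ?_
  filter_upwards [ae_pi_forall_of_ae μT ae_mem_T, ae_pi_injective μT,
    ae_pi_forall_of_ae μT (finite_corners.countable.ae_notMem μT)] with ω hT hω hωC
  have hcard : (vertexIndices corners ω).card ≤ l := card_finset_fin_le _
  rw [N_eq_card_vertexIndices hT hω hωC, div_pow, pow_sub₀ s hs hcard]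
  ring

lemma sum_antidiagonal_q_mul (l : ℕ) {x y : ℝ} (hxy : x + y ≠ 0) :
    ∑ p ∈ antidiagonal l, q p.1 p.2 * x ^ p.1 * y ^ p.2
      = (x + y) ^ l * G l (x / (x + y)) := by
  rw [pow_mul_G_div l hxy, P, ← sum_choose_mul_hullMoment μT finite_corners]
  refine Finset.sum_congr rfl fun p hp => ?_
  rw [q_eq_choose_mul_hullMoment, ← Nat.choose_symm_add, mem_antidiagonal.mp hp, mul_assoc]

end Triangle

section DoubleSeries

open Finset.HasAntidiagonal (antidiagonal mem_antidiagonal)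

lemma tsum_eq_tsum_sum_antidiagonal {A R : Type*} [AddMonoid A] [Finset.HasAntidiagonal A]
    [AddCommMonoid R] [TopologicalSpace R] [ContinuousAdd R] [T3Space R] {f : A × A → R}
    (hf : Summable f) : ∑' p, f p = ∑' a, ∑ p ∈ antidiagonal a, f p := by
  let e : (Σ a : A, antidiagonal a) ≃ A × A :=
    Finset.HasAntidiagonal.sigmaAntidiagonalEquivProd
  rw [← e.tsum_eq]
  refine ((e.summable_iff.mpr hf).tsum_sigma' fun _ => (hasSum_fintype _).summable).trans
    (tsum_congr fun a => ?_)
  rw [tsum_fintype]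
  exact Finset.sum_coe_sort (antidiagonal a) f

lemma summable_choose_mul_pow_mul_pow {a b : ℝ} (ha : 0 ≤ a) (hb : 0 ≤ b) (hab : a + b < 1) :
    Summable fun p : ℕ × ℕ => ((p.1 + p.2).choose p.2 : ℝ) * a ^ p.1 * b ^ p.2 := by
  let e : (Σ l : ℕ, antidiagonal l) ≃ ℕ × ℕ :=
    Finset.HasAntidiagonal.sigmaAntidiagonalEquivProd
  rw [← e.summable_iff, summable_sigma_of_nonneg fun _ => by
    simp only [Function.comp]; positivity]
  refine ⟨fun l => (hasSum_fintype _).summable, ?_⟩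
  convert summable_geometric_of_lt_one (add_nonneg ha hb) hab using 2 with l
  rw [tsum_fintype, (Commute.all a b).add_pow']
  refine (Finset.sum_coe_sort (antidiagonal l) fun p =>
    ((p.1 + p.2).choose p.2 : ℝ) * a ^ p.1 * b ^ p.2).trans (Finset.sum_congr rfl fun p hp => ?_)
  rw [← Nat.choose_symm_add, mem_antidiagonal.mp hp, mul_assoc, nsmul_eq_mul]

lemma abs_q_le_choose (n k : ℕ) : |q n k| ≤ (n + k).choose k := by
  rw [q_eq_choose_mul_hullMoment,
    abs_of_nonneg (mul_nonneg (Nat.cast_nonneg _) (hullMoment_nonneg _ _ _ _))]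
  exact mul_le_of_le_one_right (Nat.cast_nonneg _) (hullMoment_le_one _ _ _ _)

lemma summable_abs_q_mul {x y : ℝ} (h : |x| + |y| < 1) :
    Summable fun p : ℕ × ℕ => |q p.1 p.2 * x ^ p.1 * y ^ p.2| := by
  refine (summable_choose_mul_pow_mul_pow (abs_nonneg x) (abs_nonneg y) h).of_nonneg_of_le
    (fun _ => abs_nonneg _) fun p => ?_
  rw [abs_mul, abs_mul, abs_pow, abs_pow]
  gcongr
  exact abs_q_le_choose p.1 p.2

end DoubleSeries

/-- for `|x| + |y| < 1`, `x + y ≠ 0`, the series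
`Q(x,y) = Σ q_{n,k} x^n y^k` converges absolutely and equals `Σ_ℓ (x+y)^ℓ G_ℓ(x/(x+y))`. -/
theorem stmt5 (x y : ℝ) (h : |x| + |y| < 1) (hxy : x + y ≠ 0) :
    Summable (fun p : ℕ × ℕ => |q p.1 p.2 * x ^ p.1 * y ^ p.2|) ∧
    (∑' p : ℕ × ℕ, q p.1 p.2 * x ^ p.1 * y ^ p.2
      = ∑' l : ℕ, (x + y) ^ l * G l (x / (x + y))) := by
  have hs := summable_abs_q_mul h
  refine ⟨hs, ?_⟩
  rw [tsum_eq_tsum_sum_antidiagonal hs.of_abs]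
  exact tsum_congr fun l => sum_antidiagonal_q_mul l hxy

end
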